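/- arXiv:2009.04255 — 3 statements merged into one kernel-verified Lean document; each statement's English description precedes it below -/
import Mathlib

section
/- Suppose the primitive generators n_1,…,n_r of the fan Σ span ℝ^n, and identify X_Σ = U(K_Σ)/G_Σ with quotient map q_Σ. Let m ≥ 1 and, for 1 ≤ k ≤ r, let f_k ∈ ℂ[z_0,…,z_m] be a homogeneous polynomial of degree d*_k such that for every σ ∈ I(K_Σ) the polynomials {f_k : k ∈ σ} have no common real root except the origin of ℝ^{m+1} (so that F = (f_1,…,f_r) maps ℝ^{m+1}∖{0} into U(K_Σ)). Then there exists a (necessarily unique) map f : ℝP^m → X_Σ with f ∘ γ_m = q_Σ ∘ F on ℝ^{m+1}∖{0}, where γ_m : ℝ^{m+1}∖{0} → ℝP^m is the canonical projection, if and only if ∑_{k=1}^r d*_k n_k = 0. -/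
open scoped BigOperators
attribute [local instance] Classical.propDecidable

noncomputable section

namespace Toric


/-! ### Cones and fans -/

/-- The real vector associated to an integer vector. -/
def zr {n : ℕ} (v : Fin n → ℤ) : Fin n → ℝ := fun i => (v i : ℝ)

/-- A convex rational polyhedral cone in `ℝ^n`. -/
def IsRatCone {n : ℕ} (σ : Set (Fin n → ℝ)) : Prop :=
  ∃ s : Finset (Fin n → ℤ),
    σ = {x | ∃ lam : (Fin n → ℤ) → ℝ, (∀ v, 0 ≤ lam v) ∧ x = ∑ v ∈ s, lam v • zr v}

/-- A cone is strongly convex if `σ ∩ (-σ) = {0}`. -/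
def StronglyConvex {n : ℕ} (σ : Set (Fin n → ℝ)) : Prop := σ ∩ (-σ) = {0}

/-- `τ` is a face of `σ`, cut out by a linear form nonnegative on `σ`. -/
def IsFaceOf {n : ℕ} (τ σ : Set (Fin n → ℝ)) : Prop :=
  ∃ L : (Fin n → ℝ) →ₗ[ℝ] ℝ, (∀ x ∈ σ, 0 ≤ L x) ∧ τ = σ ∩ {x | L x = 0}

/-- A fan in `ℝ^n`: a finite collection of strongly convex rational polyhedral cones,
closed under taking faces, such that the intersection of two cones is a face of each;
we also require that it strictly contains `{0}`. -/
structure Fan (n : ℕ) where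
  cones : Set (Set (Fin n → ℝ))
  finite : cones.Finite
  ratCone : ∀ σ ∈ cones, IsRatCone σ
  stronglyConvex : ∀ σ ∈ cones, StronglyConvex σ
  face_mem : ∀ σ ∈ cones, ∀ τ, IsFaceOf τ σ → τ ∈ cones
  inter_face : ∀ σ ∈ cones, ∀ τ ∈ cones, IsFaceOf (σ ∩ τ) σ
  zero_mem : ({0} : Set (Fin n → ℝ)) ∈ cones
  nontrivial : cones ≠ {({0} : Set (Fin n → ℝ))}

/-- A fan is complete if its cones cover `ℝ^n`. -/
def Fan.Complete {n : ℕ} (F : Fan n) : Prop := ⋃₀ F.cones = Set.univ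

/-- A fan is non-singular if each of its cones is spanned by part of a `ℤ`-basis of `ℤ^n`. -/
def Fan.NonSingular {n : ℕ} (F : Fan n) : Prop :=
  ∀ σ ∈ F.cones, ∃ (b : Module.Basis (Fin n) ℤ (Fin n → ℤ)) (s : Finset (Fin n)),
    σ = {x | ∃ lam : Fin n → ℝ, (∀ i, 0 ≤ lam i) ∧ x = ∑ i ∈ s, lam i • zr (b i)}

/-- The ray (one-dimensional cone) generated by a vector. -/
def ray {n : ℕ} (v : Fin n → ℝ) : Set (Fin n → ℝ) := {x | ∃ t : ℝ, 0 ≤ t ∧ x = t • v}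

/-- The cone spanned by the vectors `n_i`, `i ∈ s`. -/
def coneIdx {n r : ℕ} (N : Fin r → Fin n → ℤ) (s : Finset (Fin r)) : Set (Fin n → ℝ) :=
  {x | ∃ lam : Fin r → ℝ, (∀ i, 0 ≤ lam i) ∧ x = ∑ i ∈ s, lam i • zr (N i)}

/-- A point of `ℝ^n` lying in the lattice `ℤ^n`. -/
def IsLatticePoint {n : ℕ} (x : Fin n → ℝ) : Prop := ∀ i, ∃ m : ℤ, x i = (m : ℝ)

/-- `N 1, …, N r` is the (complete, repetition-free) list of primitive generators of the
one-dimensional cones of the fan `F`. -/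
structure IsPrimGens {n r : ℕ} (F : Fan n) (N : Fin r → Fin n → ℤ) : Prop where
  ray_mem : ∀ k, ray (zr (N k)) ∈ F.cones
  ne_zero : ∀ k, N k ≠ 0
  primitive : ∀ k, ray (zr (N k)) ∩ {x | IsLatticePoint x}
      = {x | ∃ c : ℕ, x = (c : ℝ) • zr (N k)}
  inj : Function.Injective N
  complete : ∀ σ ∈ F.cones, Module.finrank ℝ (Submodule.span ℝ σ) = 1 →
      ∃ k, σ = ray (zr (N k))

/-- Condition (2.9.1): a positive integral relation among the primitive generators. -/
def Cond1 {n r : ℕ} (N : Fin r → Fin n → ℤ) : Prop :=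
  ∃ d : Fin r → ℕ, (∀ k, 0 < d k) ∧ ∑ k, (d k : ℤ) • N k = 0

/-- Condition (2.9.2): the primitive generators span `ℤ^n` over `ℤ`. -/
def Cond2 {n r : ℕ} (N : Fin r → Fin n → ℤ) : Prop :=
  Submodule.span ℤ (Set.range N) = ⊤

/-- The underlying simplicial complex `K_Σ` of a fan. -/
def KC {n r : ℕ} (F : Fan n) (N : Fin r → Fin n → ℤ) : Set (Finset (Fin r)) :=
  {s | coneIdx N s ∈ F.cones}

/-- A primitive set: it spans no cone of the fan, but every proper subset does. -/
def PrimitiveSet {r : ℕ} (K : Set (Finset (Fin r))) (s : Finset (Fin r)) : Prop :=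
  s ∉ K ∧ ∀ t ⊂ s, t ∈ K

/-- `r_min`: the minimal cardinality of a primitive set. -/
def rmin {r : ℕ} (K : Set (Finset (Fin r))) : ℕ :=
  sInf {m | ∃ s : Finset (Fin r), PrimitiveSet K s ∧ s.card = m}

/-- `d_min = min {d_1, …, d_r}`. -/
def dmin {r : ℕ} (D : Fin r → ℕ) : ℕ := sInf (Set.range D)

/-- The stability dimension `d(D,Σ) = 2(r_min − 1) d_min − 2`. -/
def dBound {r : ℕ} (K : Set (Finset (Fin r))) (D : Fin r → ℕ) : ℤ :=
  2 * ((rmin K : ℤ) - 1) * (dmin D : ℤ) - 2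

/-- The connectivity bound `C_D(Σ) = 2(r_min − 1) d_min − 1`. -/
def CBound {r : ℕ} (K : Set (Finset (Fin r))) (D : Fin r → ℕ) : ℤ :=
  2 * ((rmin K : ℤ) - 1) * (dmin D : ℤ) - 1

/-! ### Coordinate subspaces, `U(K)`, `G_Σ` and the toric quotient -/

/-- The coordinate subspace `L_σ ⊆ ℂ^r`. -/
def LSub {r : ℕ} (σ : Finset (Fin r)) : Set (Fin r → ℂ) := {x | ∀ i ∈ σ, x i = 0}

/-- The complement `U(K)` of the coordinate subspace arrangement of type `K`. -/
def UK {r : ℕ} (K : Set (Finset (Fin r))) : Set (Fin r → ℂ) :=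
  (⋃ σ ∈ {s : Finset (Fin r) | s ∉ K}, LSub σ)ᶜ

lemma mem_UK {r : ℕ} {K : Set (Finset (Fin r))} {x : Fin r → ℂ} :
    x ∈ UK K ↔ ∀ σ : Finset (Fin r), σ ∉ K → ∃ i ∈ σ, x i ≠ 0 := by
  constructor
  · intro h σ hσ
    by_contra hc
    push_neg at hc
    exact h (Set.mem_biUnion hσ (fun i hi => hc i hi))
  · intro h hx
    rcases Set.mem_iUnion₂.1 hx with ⟨σ, hσ, hxσ⟩
    rcases h σ hσ with ⟨i, hi, hne⟩
    exact hne (hxσ i hi)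

/-- The group `G_Σ` (as a subset of `ℂ^r`). -/
def GSet {n r : ℕ} (N : Fin r → Fin n → ℤ) : Set (Fin r → ℂ) :=
  {μ | (∀ k, μ k ≠ 0) ∧ ∀ m : Fin n → ℤ, ∏ k, μ k ^ (∑ j, N k j * m j) = 1}

/-- The orbit relation of the `G_Σ`-action on `U(K_Σ)`. -/
def toricRel {n r : ℕ} (N : Fin r → Fin n → ℤ) (K : Set (Finset (Fin r)))
    (x y : ↥(UK K)) : Prop :=
  ∃ μ ∈ GSet N, (fun i => μ i * (x : Fin r → ℂ) i) = (y : Fin r → ℂ)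

/-- The toric variety `X_Σ = U(K_Σ)/G_Σ`, as a topological quotient. -/
def XS {n r : ℕ} (N : Fin r → Fin n → ℤ) (K : Set (Finset (Fin r))) : Type :=
  Quot (toricRel N K)

instance {n r : ℕ} (N : Fin r → Fin n → ℤ) (K : Set (Finset (Fin r))) :
    TopologicalSpace (XS N K) :=
  instTopologicalSpaceQuot

/-- The quotient map `q_Σ : U(K_Σ) → X_Σ`. -/
def qmap {n r : ℕ} (N : Fin r → Fin n → ℤ) (K : Set (Finset (Fin r))) :
    ↥(UK K) → XS N K :=
  Quot.mk (toricRel N K)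

/-- `q_Σ` as a continuous map. -/
def qCont {n r : ℕ} (N : Fin r → Fin n → ℤ) (K : Set (Finset (Fin r))) :
    C(↥(UK K), XS N K) :=
  ⟨qmap N K, continuous_quot_mk⟩

lemma coneIdx_empty {n r : ℕ} (N : Fin r → Fin n → ℤ) :
    coneIdx N (∅ : Finset (Fin r)) = ({0} : Set (Fin n → ℝ)) := by
  ext x
  constructor
  · rintro ⟨lam, -, hx⟩
    simpa using hx
  · intro hx
    exact ⟨0, fun i => le_refl 0, by simpa using hx⟩

lemma empty_mem_KC {n r : ℕ} (F : Fan n) (N : Fin r → Fin n → ℤ) :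
    (∅ : Finset (Fin r)) ∈ KC F N := by
  show coneIdx N ∅ ∈ F.cones
  rw [coneIdx_empty]
  exact F.zero_mem

/-- The point `(1,…,1)`. -/
def onesC {r : ℕ} : Fin r → ℂ := fun _ => 1

lemma ones_mem_UK {r : ℕ} {K : Set (Finset (Fin r))} (h : (∅ : Finset (Fin r)) ∈ K) :
    (onesC : Fin r → ℂ) ∈ UK K := by
  rw [mem_UK]
  intro σ hσ
  rcases Finset.nonempty_iff_ne_empty.2 (fun he : σ = ∅ => hσ (by rw [he]; exact h)) with ⟨i, hi⟩
  exact ⟨i, hi, one_ne_zero⟩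

/-- The base point `(1,…,1)` of `U(K_Σ)`. -/
def onesUK {r : ℕ} {K : Set (Finset (Fin r))} (h : (∅ : Finset (Fin r)) ∈ K) : ↥(UK K) :=
  ⟨onesC, ones_mem_UK h⟩

/-- The base point `[1,…,1]` of `X_Σ`. -/
def baseX {n r : ℕ} (N : Fin r → Fin n → ℤ) (K : Set (Finset (Fin r)))
    (h : (∅ : Finset (Fin r)) ∈ K) : XS N K :=
  qmap N K (onesUK h)


/-!
Scaling `x` by `c` multiplies the point `F x` by `(c ^ d*_1, …, c ^ d*_r)`, and the character of
weight `m` takes the value `c ^ ⟨∑ d*_k n_k, m⟩` on this torus element. If `∑ d*_k n_k = 0`, the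
element lies in `G_Σ`, so `q_Σ ∘ F` is constant on lines. Conversely, at a point where no `f_k`
vanishes the torus acts freely, so `q_Σ (F (2 x)) = q_Σ (F x)` forces `(2 ^ d*_k) ∈ G_Σ`, and all
the exponents `⟨∑ d*_k n_k, m⟩` vanish because `2` is not a root of unity.
-/

lemma zpow_sum₀ {κ G₀ : Type*} [CommGroupWithZero G₀] {c : G₀} (hc : c ≠ 0) (s : Finset κ)
    (e : κ → ℤ) : c ^ (∑ k ∈ s, e k) = ∏ k ∈ s, c ^ e k := by
  induction s using Finset.induction_on with
  | empty => simp
  | insert a s ha ih => rw [Finset.sum_insert ha, Finset.prod_insert ha, zpow_add₀ hc, ih]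

lemma prod_pow_zpow_dotProduct {κ ν G₀ : Type*} [Fintype κ] [Fintype ν] [CommGroupWithZero G₀]
    {c : G₀} (hc : c ≠ 0) (d : κ → ℕ) (N : κ → ν → ℤ) (m : ν → ℤ) :
    ∏ k, (c ^ d k) ^ (N k ⬝ᵥ m) = c ^ ((∑ k, (d k : ℤ) • N k) ⬝ᵥ m) := by
  calc ∏ k, (c ^ d k) ^ (N k ⬝ᵥ m)
      = ∏ k, c ^ ((d k : ℤ) • N k ⬝ᵥ m) := by
        simp only [smul_dotProduct, smul_eq_mul, zpow_mul, zpow_natCast]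
    _ = c ^ ((∑ k, (d k : ℤ) • N k) ⬝ᵥ m) := by
        rw [sum_dotProduct, zpow_sum₀ hc]

lemma injective_two_zpow : Function.Injective fun e : ℤ => (2 : ℂ) ^ e := by
  have hreal : Function.Injective fun e : ℤ => (2 : ℝ) ^ e :=
    zpow_right_injective₀ two_pos (by norm_num)
  simpa [Function.comp_def] using Complex.ofReal_injective.comp hreal

lemma eval_smul_of_isHomogeneous {ι R : Type*} [CommSemiring R] {p : MvPolynomial ι R} {d : ℕ}
    (hp : p.IsHomogeneous d) (c : R) (x : ι → R) :
    MvPolynomial.eval (c • x) p = c ^ d * MvPolynomial.eval x p := by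
  rw [MvPolynomial.eval_eq, MvPolynomial.eval_eq, Finset.mul_sum]
  refine Finset.sum_congr rfl fun e he => ?_
  have hdeg : ∑ i ∈ e.support, e i = d := by
    simpa [Finsupp.weight_apply, Finsupp.sum] using hp (MvPolynomial.mem_support_iff.1 he)
  simp only [Pi.smul_apply, smul_eq_mul, mul_pow, Finset.prod_mul_distrib,
    Finset.prod_pow_eq_pow_sum, hdeg]
  ring

lemma exists_eval_map_ne_zero {ι R S : Type*} [Semiring R] [Infinite R] [CommRing S] [IsDomain S]
    {φ : R →+* S} (hφ : Function.Injective φ) {p : MvPolynomial ι S} (hp : p ≠ 0) :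
    ∃ x : ι → R, MvPolynomial.eval (fun i => φ (x i)) p ≠ 0 := by
  contrapose! hp
  refine MvPolynomial.funext_set (fun _ => Set.range φ)
    (fun _ => Set.infinite_range_of_injective hφ) fun y hy => ?_
  choose x hx using fun i => hy i (Set.mem_univ i)
  obtain rfl : (fun i => φ (x i)) = y := funext hx
  rw [hp x, map_zero]

lemma existsUnique_comp_projectivization_mk_iff {k V α : Type*} [DivisionRing k] [AddCommGroup V]
    [Module k V] (φ : {v : V // v ≠ 0} → α) :
    (∃! g : Projectivization k V → α,
        ∀ (v : V) (hv : v ≠ 0), g (Projectivization.mk k v hv) = φ ⟨v, hv⟩) ↔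
      ∀ (v w : {v : V // v ≠ 0}) (c : k), (v : V) = c • (w : V) → φ v = φ w := by
  constructor
  · rintro ⟨g, hg, -⟩ ⟨v, hv⟩ ⟨w, hw⟩ c hvw
    rw [← hg v hv, ← hg w hw, (Projectivization.mk_eq_mk_iff' k v w hv hw).2 ⟨c, hvw.symm⟩]
  · intro hφ
    exact ⟨Projectivization.lift φ hφ, Projectivization.lift_mk φ hφ,
      fun g hg => funext <| Projectivization.ind hg⟩

section PolyMap

variable {ι κ k A : Type*} [CommSemiring k] [CommSemiring A] [Algebra k A]

/-- The map `F = (f_j)_j : k^ι → A^κ` given by a family of polynomials with coefficients in a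
`k`-algebra `A`; for `k = ℝ` and `A = ℂ` it is the map `F` of Cox's lemma. -/
def polyMap (f : κ → MvPolynomial ι A) (x : ι → k) : κ → A :=
  fun j => MvPolynomial.eval (fun i => algebraMap k A (x i)) (f j)

lemma polyMap_smul {f : κ → MvPolynomial ι A} {d : κ → ℕ} (hf : ∀ j, (f j).IsHomogeneous (d j))
    (c : k) (x : ι → k) :
    polyMap f (c • x) = (fun j => algebraMap k A c ^ d j) * polyMap f x := by
  funext j
  simp only [polyMap, Pi.mul_apply, Pi.smul_apply, smul_eq_mul, map_mul]
  exact eval_smul_of_isHomogeneous (hf j) (algebraMap k A c) fun i => algebraMap k A (x i)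

end PolyMap

lemma exists_ne_zero_forall_polyMap_ne_zero {ι κ k A : Type*} [Nonempty ι] [Finite κ]
    [CommSemiring k] [Infinite k] [CommRing A] [IsDomain A] [Algebra k A] [FaithfulSMul k A]
    {f : κ → MvPolynomial ι A} (hf : ∀ j, f j ≠ 0) :
    ∃ x : ι → k, x ≠ 0 ∧ ∀ j, polyMap f x j ≠ 0 := by
  obtain ⟨_⟩ := nonempty_fintype κ
  let i₀ : ι := Classical.arbitrary ι
  -- The factor `X i₀` keeps the point away from the origin.
  have hprod : (∏ j, f j) * MvPolynomial.X i₀ ≠ 0 :=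
    mul_ne_zero (Finset.prod_ne_zero_iff.2 fun j _ => hf j) (MvPolynomial.X_ne_zero i₀)
  obtain ⟨x, hx⟩ := exists_eval_map_ne_zero (FaithfulSMul.algebraMap_injective k A) hprod
  rw [map_mul, map_prod, MvPolynomial.eval_X] at hx
  refine ⟨x, ?_, fun j => Finset.prod_ne_zero_iff.1 (left_ne_zero_of_mul hx) j (Finset.mem_univ j)⟩
  rintro rfl
  exact right_ne_zero_of_mul hx (by simp)

section GSet

variable {n r : ℕ} {N : Fin r → Fin n → ℤ}

lemma one_mem_GSet : (1 : Fin r → ℂ) ∈ GSet N :=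
  ⟨fun _ => one_ne_zero, fun m => by simp⟩

lemma mul_mem_GSet {μ ν : Fin r → ℂ} (hμ : μ ∈ GSet N) (hν : ν ∈ GSet N) : μ * ν ∈ GSet N :=
  ⟨fun k => mul_ne_zero (hμ.1 k) (hν.1 k), fun m => by
    simp only [Pi.mul_apply, mul_zpow, Finset.prod_mul_distrib, hμ.2 m, hν.2 m, one_mul]⟩

lemma inv_mem_GSet {μ : Fin r → ℂ} (hμ : μ ∈ GSet N) : μ⁻¹ ∈ GSet N :=
  ⟨fun k => inv_ne_zero (hμ.1 k), fun m => by
    simp only [Pi.inv_apply, inv_zpow, Finset.prod_inv_distrib, hμ.2 m, inv_one]⟩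

lemma pow_mem_GSet {d : Fin r → ℕ} (hd : ∑ k, (d k : ℤ) • N k = 0) {c : ℂ} (hc : c ≠ 0) :
    (fun k => c ^ d k) ∈ GSet N := by
  refine ⟨fun k => pow_ne_zero _ hc, fun m => ?_⟩
  rw [← zpow_zero c, ← zero_dotProduct m, ← hd]
  exact prod_pow_zpow_dotProduct hc d N m

lemma sum_smul_eq_zero_of_pow_mem_GSet {d : Fin r → ℕ} {c : ℂ} (hc₀ : c ≠ 0)
    (hc : Function.Injective fun e : ℤ => c ^ e) (h : (fun k => c ^ d k) ∈ GSet N) :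
    ∑ k, (d k : ℤ) • N k = 0 := by
  refine dotProduct_eq_zero _ fun m => hc ?_
  simpa only [zpow_zero] using (prod_pow_zpow_dotProduct hc₀ d N m).symm.trans (h.2 m)

variable {K : Set (Finset (Fin r))}

lemma toricRel_equivalence : Equivalence (toricRel N K) where
  refl x := ⟨1, one_mem_GSet, one_mul x.1⟩
  symm := by
    rintro x y ⟨μ, hμ, hxy⟩
    refine ⟨μ⁻¹, inv_mem_GSet hμ, funext fun i => ?_⟩
    rw [← hxy, Pi.inv_apply, inv_mul_cancel_left₀ (hμ.1 i)]
  trans := by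
    rintro x y z ⟨μ, hμ, hxy⟩ ⟨ν, hν, hyz⟩
    refine ⟨ν * μ, mul_mem_GSet hν hμ, ?_⟩
    rw [← hyz, ← hxy]
    exact mul_assoc ν μ x.1

lemma qmap_eq_qmap_iff {x y : ↥(UK K)} : qmap N K x = qmap N K y ↔ toricRel N K x y :=
  toricRel_equivalence.quot_mk_eq_iff x y

lemma mem_GSet_of_toricRel {x y : ↥(UK K)} {μ : Fin r → ℂ} (hx : ∀ k, x.1 k ≠ 0)
    (hy : y.1 = μ * x.1) (h : toricRel N K x y) : μ ∈ GSet N := by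
  obtain ⟨ν, hν, hxy⟩ := h
  obtain rfl : ν = μ := funext fun k => mul_right_cancel₀ (hx k) (congrFun (hxy.trans hy) k)
  exact hν

end GSet

section Descent

variable {n r : ℕ} {N : Fin r → Fin n → ℤ} {K : Set (Finset (Fin r))} {ι k : Type*} [Field k]
  [Algebra k ℂ] {d : Fin r → ℕ} {f : Fin r → MvPolynomial ι ℂ}

lemma qmap_polyMap_smul (hf : ∀ j, (f j).IsHomogeneous (d j)) (hd : ∑ j, (d j : ℤ) • N j = 0)
    {c : k} (hc : c ≠ 0) {x : ι → k} (hx : polyMap f x ∈ UK K)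
    (hcx : polyMap f (c • x) ∈ UK K) :
    qmap N K ⟨polyMap f (c • x), hcx⟩ = qmap N K ⟨polyMap f x, hx⟩ :=
  (Quot.sound ⟨_, pow_mem_GSet hd ((map_ne_zero (algebraMap k ℂ)).2 hc),
    (polyMap_smul hf c x).symm⟩).symm

lemma sum_smul_eq_zero_of_qmap_polyMap_two_smul (hf : ∀ j, (f j).IsHomogeneous (d j)) {x : ι → k}
    (hx₀ : ∀ j, polyMap f x j ≠ 0) (hx : polyMap f x ∈ UK K)
    (h2x : polyMap f ((2 : k) • x) ∈ UK K)
    (h : qmap N K ⟨polyMap f ((2 : k) • x), h2x⟩ = qmap N K ⟨polyMap f x, hx⟩) :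
    ∑ j, (d j : ℤ) • N j = 0 := by
  have hscale : polyMap f ((2 : k) • x) = (fun j => (2 : ℂ) ^ d j) * polyMap f x := by
    simpa only [map_ofNat] using polyMap_smul hf (2 : k) x
  exact sum_smul_eq_zero_of_pow_mem_GSet two_ne_zero injective_two_zpow
    (mem_GSet_of_toricRel hx₀ hscale (qmap_eq_qmap_iff.1 h.symm))

end Descent

theorem algebraic_map_exists_iff_general
    {n r : ℕ} (N : Fin r → Fin n → ℤ) (K : Set (Finset (Fin r)))
    {ι k : Type*} [Nonempty ι] [Field k] [Algebra k ℂ] (d : Fin r → ℕ)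
    (f : Fin r → MvPolynomial ι ℂ) (hf0 : ∀ j, f j ≠ 0) (hhom : ∀ j, (f j).IsHomogeneous (d j))
    (hroot : ∀ σ : Finset (Fin r), σ ∉ K → ∀ x : ι → k, x ≠ 0 → ∃ j ∈ σ, polyMap f x j ≠ 0) :
    (∃! g : Projectivization k (ι → k) → XS N K,
        ∀ (x : ι → k) (hx : x ≠ 0) (hmem : polyMap f x ∈ UK K),
          g (Projectivization.mk k x hx) = qmap N K ⟨_, hmem⟩) ↔
      ∑ j, (d j : ℤ) • N j = 0 := by
  have hU (x : ι → k) (hx : x ≠ 0) : polyMap f x ∈ UK K :=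
    mem_UK.2 fun σ hσ => hroot σ hσ x hx
  let φ (x : {x : ι → k // x ≠ 0}) : XS N K := qmap N K ⟨polyMap f x.1, hU x.1 x.2⟩
  refine (existsUnique_congr fun g => forall₂_congr fun x hx =>
    forall_prop_of_true (hU x hx)).trans
      ((existsUnique_comp_projectivization_mk_iff φ).trans ⟨fun hφ => ?_, fun hd => ?_⟩)
  · have : CharZero k := (algebraMap k ℂ).charZero
    obtain ⟨x, hx, hfx⟩ := exists_ne_zero_forall_polyMap_ne_zero (k := k) hf0
    have h2x : (2 : k) • x ≠ 0 := smul_ne_zero two_ne_zero hx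
    exact sum_smul_eq_zero_of_qmap_polyMap_two_smul hhom hfx _ _ (hφ ⟨_, h2x⟩ ⟨x, hx⟩ 2 rfl)
  · rintro ⟨_, hcx⟩ ⟨x, hx⟩ c rfl
    exact qmap_polyMap_smul hhom hd (left_ne_zero_of_smul hcx) _ _

/-- **Cox's lemma.** Given homogeneous polynomials `f_1,…,f_r` on
`ℝ^{m+1}` (with complex coefficients) of degrees `d*_1,…,d*_r`, with no common real
root except the origin over any `σ ∉ K_Σ`, there exists a (necessarily unique) map
`f : ℝP^m → X_Σ` with `f ∘ γ_m = q_Σ ∘ F` if and only if `∑ d*_k n_k = 0`. -/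
theorem algebraic_map_exists_iff
    {n r : ℕ} (F : Fan n) (N : Fin r → Fin n → ℤ) (hPG : IsPrimGens F N)
    (hspanR : Submodule.span ℝ (Set.range fun k => zr (N k)) = ⊤)
    (m : ℕ) (hm : 1 ≤ m) (dstar : Fin r → ℕ)
    (f : Fin r → MvPolynomial (Fin (m + 1)) ℂ)
    (hf0 : ∀ k, f k ≠ 0)
    (hhom : ∀ k, (f k).IsHomogeneous (dstar k))
    (hroot : ∀ σ : Finset (Fin r), σ ∉ KC F N →
      ∀ x : Fin (m + 1) → ℝ, x ≠ 0 →
        ∃ k ∈ σ, MvPolynomial.eval (fun i => ((x i : ℝ) : ℂ)) (f k) ≠ 0) :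
    (∃! g : Projectivization ℝ (Fin (m + 1) → ℝ) → XS N (KC F N),
        ∀ (x : Fin (m + 1) → ℝ) (hx : x ≠ 0)
          (hmem : (fun k => MvPolynomial.eval (fun i => ((x i : ℝ) : ℂ)) (f k))
              ∈ UK (KC F N)),
          g (Projectivization.mk ℝ x hx) = qmap N (KC F N) ⟨_, hmem⟩) ↔
      ∑ k, (dstar k : ℤ) • N k = 0 :=
  algebraic_map_exists_iff_general N (KC F N) dstar f hf0 hhom hroot

end Toric
end
end

section
/- Let Σ be a non-singular fan in ℝ^n whose primitive generators n_1,…,n_r span ℤ^n over ℤ (condition (2.9.2)). Then G_Σ is isomorphic as a topological group to (ℂ*)^{r−n}, and the coordinatewise action of G_Σ on U(K_Σ) is free (i.e. if μ ∈ G_Σ and x ∈ U(K_Σ) satisfy μ·x = x, then μ = (1,…,1)). -/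
open scoped BigOperators
attribute [local instance] Classical.propDecidable

noncomputable section

namespace Toric


/-- `G_Σ` as a subgroup of the torus `(ℂ*)^r`. -/
def GSub {n r : ℕ} (N : Fin r → Fin n → ℤ) : Subgroup (Fin r → ℂˣ) where
  carrier := {μ | ∀ m : Fin n → ℤ, ∏ k, ((μ k : ℂ)) ^ (∑ j, N k j * m j) = 1}
  one_mem' := by intro m; simp
  mul_mem' := by
    intro a b ha hb m
    simp only [Pi.mul_apply, Units.val_mul, mul_zpow, Finset.prod_mul_distrib,
      ha m, hb m, one_mul]
  inv_mem' := by
    intro a ha m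
    simp only [Pi.inv_apply, Units.val_inv_eq_inv_val, inv_zpow]
    rw [Finset.prod_inv_distrib, ha m, inv_one]

/-!
Since the columns of `Nᵀ` span `ℤ^n`, the surjection `Nᵀ : ℤ^r → ℤ^n` splits and its kernel is free,
so `Nᵀ` is the lower block of an invertible integer matrix. The automorphism of `(ℂˣ)^r` given by
the monomials of this matrix carries `G_Σ` to the subtorus whose last `n` coordinates are `1`.

A point `x` of `U(K_Σ)` vanishes exactly on a set `s` of coordinates spanning a cone `σ` of `Σ`, and
a `μ` fixing `x` is `1` outside `s`. Each `n_k` with `k ∈ s` belongs to a basis `b` adapted to `σ`: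
its ray is a face of `σ`, hence contains some `b_i`, and primitivity forces `b_i = n_k`. Evaluating
the relations defining `G_Σ` at the dual basis vector of `n_k` leaves only the factor `μ_k`.
-/

section LinearAlgebra

open Matrix

lemma isUnit_of_basis_eq_smul {R ι E : Type*} [CommSemiring R] [AddCommMonoid E] [Module R E]
    (b : Module.Basis ι R E) {i : ι} {c : R} {v : E} (h : b i = c • v) : IsUnit c := by
  have hcoord : c * b.coord i v = 1 := by
    simpa using (congrArg (b.coord i) h).symm
  exact IsUnit.of_mul_eq_one _ hcoord

lemma exists_dotProduct_basis_eq {R ι κ : Type*} [CommSemiring R] [Fintype ι] [DecidableEq κ]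
    (b : Module.Basis κ R (ι → R)) (i : κ) :
    ∃ m : ι → R, ∀ j, b j ⬝ᵥ m = if j = i then 1 else 0 := by
  obtain ⟨m, hm⟩ := (dotProductEquiv R ι).surjective (b.coord i)
  refine ⟨m, fun j => ?_⟩
  rw [dotProduct_comm, ← dotProductEquiv_apply_apply, hm]
  simp [Finsupp.single_apply]

variable {R : Type*} [CommRing R] [IsDomain R] [IsPrincipalIdealRing R]

lemma exists_linearEquiv_prod_of_surjective {E F : Type*} [AddCommGroup E] [Module R E]
    [Module.Free R E] [Module.Finite R E] [AddCommGroup F] [Module R F] [Module.Free R F]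
    (f : E →ₗ[R] F) (hf : Function.Surjective f) :
    ∃ e : E ≃ₗ[R] (Fin (Module.finrank R E - Module.finrank R F) → R) × F,
      LinearMap.snd R _ F ∘ₗ e.toLinearMap = f := by
  obtain ⟨s, hs⟩ := Module.projective_lifting_property f LinearMap.id hf
  obtain ⟨e, -, hfe⟩ := (LinearMap.exact_subtype_ker_map f).splitSurjectiveEquiv
    (LinearMap.ker f).injective_subtype ⟨s, hs⟩
  have : Module.Finite R F := Module.Finite.of_surjective f hf
  have hrank : Module.finrank R (LinearMap.ker f) = Module.finrank R E - Module.finrank R F := by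
    rw [e.finrank_eq, Module.finrank_prod, Nat.add_sub_cancel]
  let b := Module.finBasisOfFinrankEq R (LinearMap.ker f) hrank
  exact ⟨e ≪≫ₗ b.equivFun.prodCongr (LinearEquiv.refl R F), hfe.symm⟩

lemma exists_fromRows_mul_eq_one {ι κ : Type*} [Fintype ι] [Fintype κ]
    [DecidableEq ι] [DecidableEq κ] (M : Matrix κ ι R)
    (hM : Submodule.span R (Set.range M.col) = ⊤) :
    ∃ (B : Matrix (Fin (Fintype.card ι - Fintype.card κ)) ι R)
      (Q : Matrix ι (Fin (Fintype.card ι - Fintype.card κ) ⊕ κ) R),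
      fromRows B M * Q = 1 ∧ Q * fromRows B M = 1 := by
  have hsurj : Function.Surjective (toLin' M) := by
    rwa [← LinearMap.range_eq_top, range_toLin']
  have h := exists_linearEquiv_prod_of_surjective (toLin' M) hsurj
  rw [Module.finrank_fintype_fun_eq_card, Module.finrank_fintype_fun_eq_card] at h
  obtain ⟨e, he⟩ := h
  let g := e ≪≫ₗ (LinearEquiv.sumArrowLequivProdArrow _ κ R R).symm
  let P := LinearMap.toMatrix' g.toLinearMap
  have hrows : fromRows P.toRows₁ M = P := by
    conv_rhs => rw [← fromRows_toRows P]
    rw [← LinearMap.toMatrix'_toLin' M, ← he]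
    rfl
  refine ⟨P.toRows₁, LinearMap.toMatrix' g.symm.toLinearMap, ?_, ?_⟩
  · rw [hrows, ← LinearMap.toMatrix'_comp, LinearEquiv.comp_symm, LinearMap.toMatrix'_id]
  · rw [hrows, ← LinearMap.toMatrix'_comp, LinearEquiv.symm_comp, LinearMap.toMatrix'_id]

end LinearAlgebra

section MonomialHom

open Matrix

lemma zpow_sum {ι A : Type*} [CommGroup A] (a : A) (s : Finset ι) (f : ι → ℤ) :
    a ^ (∑ i ∈ s, f i) = ∏ i ∈ s, a ^ f i :=
  congrArg Additive.toMul (Finset.sum_smul (f := f) (s := s) (x := Additive.ofMul a))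

variable {ι κ κ' A : Type*} [Fintype ι] [CommGroup A]

/-- The homomorphism `A^ι → A^κ` whose `j`-th component is the Laurent monomial with the `j`-th
row of `M` as exponents. For `A = ℂˣ` these are the homomorphisms of tori, and `G_Σ` is the kernel
of one of them. -/
def monomialHom (M : Matrix κ ι ℤ) : (ι → A) →* (κ → A) where
  toFun μ j := ∏ i, μ i ^ M j i
  map_one' := by ext; simp
  map_mul' μ ν := by ext; simp [mul_zpow, Finset.prod_mul_distrib]

lemma monomialHom_apply (M : Matrix κ ι ℤ) (μ : ι → A) (j : κ) :
    monomialHom M μ j = ∏ i, μ i ^ M j i := rfl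

lemma continuous_monomialHom [TopologicalSpace A] [IsTopologicalGroup A] (M : Matrix κ ι ℤ) :
    Continuous (monomialHom M : (ι → A) → κ → A) :=
  continuous_pi fun _ => continuous_finsetProd _ fun i _ => (continuous_apply i).zpow _

lemma prod_zpow_vecMul [Fintype κ] (M : Matrix κ ι ℤ) (μ : ι → A) (m : κ → ℤ) :
    ∏ i, μ i ^ (m ᵥ* M) i = ∏ j, monomialHom M μ j ^ m j := by
  simp only [vecMul, dotProduct, zpow_sum, monomialHom_apply, ← Finset.prod_zpow,
    ← _root_.zpow_mul']
  exact Finset.prod_comm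

lemma monomialHom_mul [Fintype κ] (L : Matrix κ' κ ℤ) (M : Matrix κ ι ℤ) (μ : ι → A) :
    monomialHom (L * M) μ = monomialHom L (monomialHom M μ) :=
  funext fun l => prod_zpow_vecMul M μ (L l)

lemma monomialHom_one [DecidableEq ι] (μ : ι → A) : monomialHom 1 μ = μ := by
  ext i
  simp [monomialHom_apply, Matrix.one_apply, apply_ite]

lemma monomialHom_fromRows (B : Matrix κ' ι ℤ) (M : Matrix κ ι ℤ) (μ : ι → A) :
    monomialHom (fromRows B M) μ = Sum.elim (monomialHom B μ) (monomialHom M μ) := by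
  ext (_ | _) <;> rfl

/-- If the rows of `M` are completed by those of `B` to an invertible matrix with inverse `Q`, then
the monomials of `B` are coordinates on the kernel of `monomialHom M`, identifying it with a power
of `A`. -/
def kerMonomialHomEquiv [Fintype κ] [Fintype κ'] [DecidableEq ι] [DecidableEq κ] [DecidableEq κ']
    [TopologicalSpace A] [IsTopologicalGroup A]
    (B : Matrix κ' ι ℤ) (M : Matrix κ ι ℤ) (Q : Matrix ι (κ' ⊕ κ) ℤ)
    (hQ : fromRows B M * Q = 1) (hQ' : Q * fromRows B M = 1) :
    (monomialHom M : (ι → A) →* (κ → A)).ker ≃ₜ* (κ' → A) :=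
  have hright (ν : κ' → A) : Sum.elim (monomialHom B (monomialHom Q (Sum.elim ν 1)))
      (monomialHom M (monomialHom Q (Sum.elim ν 1))) = Sum.elim ν 1 := by
    rw [← monomialHom_fromRows, ← monomialHom_mul, hQ, monomialHom_one]
  { toFun μ := monomialHom B μ.1
    invFun ν := ⟨monomialHom Q (Sum.elim ν 1), funext fun j => congrFun (hright ν) (Sum.inr j)⟩
    left_inv μ := by
      ext1
      change monomialHom Q (Sum.elim (monomialHom B μ.1) 1) = μ.1
      rw [← MonoidHom.mem_ker.1 μ.2, ← monomialHom_fromRows, ← monomialHom_mul, hQ',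
        monomialHom_one]
    right_inv ν := funext fun j => congrFun (hright ν) (Sum.inl j)
    map_mul' μ ν := map_mul (monomialHom B) μ.1 ν.1
    continuous_toFun := (continuous_monomialHom B).comp continuous_subtype_val
    continuous_invFun := by
      refine ((continuous_monomialHom Q).comp (continuous_pi ?_)).subtype_mk _
      rintro (j | _)
      exacts [continuous_apply j, continuous_const] }

lemma nonempty_ker_monomialHom_equiv [Fintype κ] [TopologicalSpace A] [IsTopologicalGroup A]
    (M : Matrix κ ι ℤ) (hM : Submodule.span ℤ (Set.range M.col) = ⊤) :
    Nonempty ((monomialHom M : (ι → A) →* (κ → A)).ker ≃ₜ*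
      (Fin (Fintype.card ι - Fintype.card κ) → A)) := by
  obtain ⟨B, Q, hQ, hQ'⟩ := exists_fromRows_mul_eq_one M hM
  exact ⟨kerMonomialHomEquiv B M Q hQ hQ'⟩

lemma GSub_eq_ker_monomialHom {n r : ℕ} (N : Fin r → Fin n → ℤ) :
    GSub N = (monomialHom (of N)ᵀ).ker := by
  ext μ
  calc
    μ ∈ GSub N ↔ ∀ m, ∏ k, μ k ^ (m ᵥ* (of N)ᵀ) k = 1 := by
      refine forall_congr' fun m => ?_
      rw [vecMul_transpose, Units.ext_iff]
      simp [mulVec, dotProduct]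
    _ ↔ ∀ m : Fin n → ℤ, ∏ j, monomialHom (of N)ᵀ μ j ^ m j = 1 := by
      simp only [prod_zpow_vecMul]
    _ ↔ monomialHom (of N)ᵀ μ = 1 := by
      refine ⟨fun h => funext fun j => ?_, fun h m => by simp [h]⟩
      simpa [Pi.single_apply, apply_ite] using h (Pi.single j 1)

end MonomialHom

section Fan

variable {n r : ℕ} {F : Fan n} {N : Fin r → Fin n → ℤ}

lemma zr_injective : Function.Injective (zr : (Fin n → ℤ) → Fin n → ℝ) :=
  Int.cast_injective.comp_left

lemma zr_zero : zr (0 : Fin n → ℤ) = 0 := by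
  ext; simp [zr]

lemma zr_nsmul (c : ℕ) (v : Fin n → ℤ) : zr (c • v) = (c : ℝ) • zr v := by
  ext; simp [zr]

lemma zr_mem_coneIdx {s : Finset (Fin r)} {k : Fin r} (hk : k ∈ s) :
    zr (N k) ∈ coneIdx N s :=
  ⟨Pi.single k 1, fun i => by obtain rfl | hi := eq_or_ne i k <;> simp [*],
    by simp [Pi.single_apply, hk]⟩

lemma Fan.smul_mem {σ : Set (Fin n → ℝ)} (hσ : σ ∈ F.cones) {c : ℝ} (hc : 0 ≤ c)
    {x : Fin n → ℝ} (hx : x ∈ σ) : c • x ∈ σ := by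
  obtain ⟨s, rfl⟩ := F.ratCone σ hσ
  obtain ⟨lam, hlam, rfl⟩ := hx
  exact ⟨c • lam, fun v => mul_nonneg hc (hlam v), by simp [Finset.smul_sum, mul_smul]⟩

lemma IsPrimGens.isFaceOf_ray (hPG : IsPrimGens F N) {σ : Set (Fin n → ℝ)} (hσ : σ ∈ F.cones)
    {k : Fin r} (hk : zr (N k) ∈ σ) : IsFaceOf (ray (zr (N k))) σ := by
  have hsub : ray (zr (N k)) ⊆ σ := by
    rintro _ ⟨c, hc, rfl⟩
    exact F.smul_mem hσ hc hk
  simpa [Set.inter_eq_right.2 hsub] using F.inter_face σ hσ _ (hPG.ray_mem k)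

lemma IsFaceOf.exists_zr_mem {s : Finset (Fin r)} {τ : Set (Fin n → ℝ)}
    (hτ : IsFaceOf τ (coneIdx N s)) {x : Fin n → ℝ} (hx : x ∈ τ) (hx0 : x ≠ 0) :
    ∃ i ∈ s, zr (N i) ∈ τ := by
  obtain ⟨L, hL, rfl⟩ := hτ
  obtain ⟨⟨lam, hlam, rfl⟩, hLx⟩ := hx
  obtain ⟨i, hi, hterm⟩ := Finset.exists_ne_zero_of_sum_ne_zero hx0
  have hnonneg : ∀ j ∈ s, 0 ≤ lam j * L (zr (N j)) := fun j hj =>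
    mul_nonneg (hlam j) (hL _ (zr_mem_coneIdx hj))
  have hsum : ∑ j ∈ s, lam j * L (zr (N j)) = 0 := by
    simpa using hLx
  have hLi : L (zr (N i)) = 0 :=
    (mul_eq_zero.1 ((Finset.sum_eq_zero_iff_of_nonneg hnonneg).1 hsum i hi)).resolve_left
      (left_ne_zero_of_smul hterm)
  exact ⟨i, hi, zr_mem_coneIdx hi, hLi⟩

lemma IsPrimGens.exists_nsmul_eq (hPG : IsPrimGens F N) {k : Fin r} {v : Fin n → ℤ}
    (hv : zr v ∈ ray (zr (N k))) : ∃ c : ℕ, v = c • N k := by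
  have hlattice : zr v ∈ ray (zr (N k)) ∩ {x | IsLatticePoint x} := ⟨hv, fun j => ⟨v j, rfl⟩⟩
  obtain ⟨c, hc⟩ := (hPG.primitive k).subset hlattice
  exact ⟨c, zr_injective (hc.trans (zr_nsmul c (N k)).symm)⟩

lemma IsPrimGens.exists_basis_eq (hPG : IsPrimGens F N)
    (b : Module.Basis (Fin n) ℤ (Fin n → ℤ)) {t : Finset (Fin n)} (hσ : coneIdx b t ∈ F.cones)
    {k : Fin r} (hk : zr (N k) ∈ coneIdx b t) : ∃ i, b i = N k := by
  have hne : zr (N k) ≠ 0 := fun h =>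
    hPG.ne_zero k (zr_injective (h.trans zr_zero.symm))
  obtain ⟨i, -, hi⟩ := (hPG.isFaceOf_ray hσ hk).exists_zr_mem
    ⟨1, zero_le_one, (one_smul ℝ _).symm⟩ hne
  obtain ⟨c, hc⟩ := hPG.exists_nsmul_eq hi
  have hunit : IsUnit (c : ℤ) := isUnit_of_basis_eq_smul b (hc.trans (natCast_zsmul _ _).symm)
  obtain rfl : c = 1 := Nat.isUnit_iff.1 (Int.ofNat_isUnit.1 hunit)
  exact ⟨i, hc.trans (one_smul ℕ _)⟩

lemma IsPrimGens.exists_dotProduct_eq (hPG : IsPrimGens F N) (hNS : F.NonSingular)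
    {s : Finset (Fin r)} (hs : s ∈ KC F N) {k : Fin r} (hk : k ∈ s) :
    ∃ m : Fin n → ℤ, ∀ l ∈ s, N l ⬝ᵥ m = if l = k then 1 else 0 := by
  obtain ⟨b, t, hb : coneIdx N s = coneIdx b t⟩ := hNS _ hs
  have hbasis : ∀ l ∈ s, ∃ i, b i = N l := fun l hl =>
    hPG.exists_basis_eq b (hb ▸ hs) (hb ▸ zr_mem_coneIdx hl)
  obtain ⟨i, hi⟩ := hbasis k hk
  obtain ⟨m, hm⟩ := exists_dotProduct_basis_eq b i
  refine ⟨m, fun l hl => ?_⟩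
  obtain ⟨j, hj⟩ := hbasis l hl
  have hiff : j = i ↔ l = k := by
    rw [← b.injective.eq_iff, hi, hj, hPG.inj.eq_iff]
  simp only [← hj, hm, hiff]

lemma IsPrimGens.eq_one_of_mem_KC (hPG : IsPrimGens F N) (hNS : F.NonSingular)
    {μ : Fin r → ℂ} (hμ : μ ∈ GSet N) {s : Finset (Fin r)} (hs : s ∈ KC F N)
    (hμs : ∀ l ∉ s, μ l = 1) {k : Fin r} (hk : k ∈ s) : μ k = 1 := by
  obtain ⟨m, hm⟩ := hPG.exists_dotProduct_eq hNS hs hk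
  have hfactor : ∀ l, μ l ^ (N l ⬝ᵥ m) = if l = k then μ l else 1 := by
    intro l
    by_cases hl : l ∈ s
    · rw [hm l hl]
      split_ifs <;> simp
    · simp [hμs l hl]
  calc
    μ k = ∏ l, μ l ^ (N l ⬝ᵥ m) := by simp [hfactor]
    _ = 1 := hμ.2 m

lemma filter_eq_zero_mem_of_mem_UK {K : Set (Finset (Fin r))} {x : Fin r → ℂ} (hx : x ∈ UK K) :
    Finset.univ.filter (fun i => x i = 0) ∈ K := by
  by_contra hK
  obtain ⟨i, hi, hxi⟩ := mem_UK.1 hx _ hK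
  exact hxi (Finset.mem_filter.1 hi).2

lemma IsPrimGens.eq_onesC_of_mul_eq_self (hPG : IsPrimGens F N) (hNS : F.NonSingular)
    {μ : Fin r → ℂ} (hμ : μ ∈ GSet N) {x : Fin r → ℂ} (hx : x ∈ UK (KC F N))
    (hfix : (fun i => μ i * x i) = x) : μ = onesC := by
  have hne : ∀ i, x i ≠ 0 → μ i = 1 := fun i hi => (mul_eq_right₀ hi).1 (congrFun hfix i)
  funext k
  by_cases hk : x k = 0
  · exact hPG.eq_one_of_mem_KC hNS hμ (filter_eq_zero_mem_of_mem_UK hx)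
      (fun l hl => hne l (by simpa using hl)) (by simpa using hk)
  · exact hne k hk

end Fan

/-- If the primitive generators of the non-singular fan `Σ` span `ℤ^n`
over `ℤ`, then `G_Σ` is isomorphic, as a topological group, to `(ℂ*)^{r−n}`, and its
coordinatewise action on `U(K_Σ)` is free. -/
theorem GSigma_iso_and_free_action
    {n r : ℕ} (F : Fan n) (N : Fin r → Fin n → ℤ)
    (hPG : IsPrimGens F N) (hNS : F.NonSingular) (h2 : Cond2 N) :
    (∃ e : ↥(GSub N) ≃* (Fin (r - n) → ℂˣ), Continuous ⇑e ∧ Continuous ⇑e.symm) ∧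
    (∀ μ ∈ GSet N, ∀ x ∈ UK (KC F N),
      (fun i => μ i * x i) = x → μ = (onesC : Fin r → ℂ)) := by
  refine ⟨?_, fun μ hμ x hx hfix => hPG.eq_onesC_of_mul_eq_self hNS hμ hx hfix⟩
  have hker := nonempty_ker_monomialHom_equiv (A := ℂˣ) (Matrix.of N).transpose h2
  rw [← GSub_eq_ker_monomialHom, Fintype.card_fin, Fintype.card_fin] at hker
  obtain ⟨e⟩ := hker
  exact ⟨e.toMulEquiv, e.continuous, e.symm.continuous⟩

end Toric
end
end

section
/- Let K be an abstract simplicial complex on the vertex set [r] = {1,…,r} (a collection of subsets of [r] closed under taking subsets and containing ∅) that contains every singleton {i}. Let Z_K = {x ∈ ℂ^r : |x_i| ≤ 1 for all i, and {i : |x_i| < 1} ∈ K} (the moment-angle complex Z_K(D²,S¹)) and U(K) = ℂ^r ∖ ⋃_{σ∉K} L_σ, where L_σ = {x ∈ ℂ^r : x_i = 0 for all i ∈ σ}. Then: (i) Z_K is 2-connected (path-connected with π_1(Z_K) = π_2(Z_K) = 0); and (ii) Z_K ⊆ U(K) and there is a deformation retraction r_ℂ : U(K) → Z_K that is equivariant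 with respect to the coordinatewise action of the torus 𝕋^r = (S¹)^r on ℂ^r. -/
open scoped BigOperators
attribute [local instance] Classical.propDecidable

noncomputable section

namespace Toric


/-- The moment-angle complex `Z_K = Z_K(D², S¹) ⊆ ℂ^r`. -/
def ZK {r : ℕ} (K : Set (Finset (Fin r))) : Set (Fin r → ℂ) :=
  {x | (∀ i, ‖x i‖ ≤ 1) ∧
    (Finset.univ.filter fun i => ‖x i‖ < 1) ∈ K}

/-! Removing finitely many real subspaces of codimension at least `n + 2` from a vector space leaves
an `n`-connected space: smooth a `k`-cube `g` with `k ≤ n` and contract it to its base point along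
straight lines, adding `w • p`, where `w` vanishes exactly where the contraction is prescribed. The
vectors `p` for which this meets a removed subspace form a set of dimension less than that of the
ambient space, so a good `p` exists. If all sets with at most `m` elements are simplices, then
`U(K)` is the complement of subspaces of real codimension at least `2 * m + 2`.

To retract `U(K)` onto `Z_K`, let `s x` be the largest number in `[0, 1]` for which
`{i | ‖x i‖ < s x}` is a simplex, and divide `x i` by `max (s x) ‖x i‖`. This factor
depends on the moduli only, so the map is equivariant, and scaling the coordinates by positive
numbers does not leave `U(K)`, so the map is homotopic to the identity. -/

open scoped unitInterval Topology Topology.Homotopy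

/-- `n`-connectedness: a nonempty space all of whose homotopy groups `π_k`, `k ≤ n`, vanish at every
base point. The case `k = 0` encodes path connectedness. -/
structure IsNConnected (n : ℕ) (X : Type*) [TopologicalSpace X] : Prop where
  nonempty : Nonempty X
  subsingleton_pi : ∀ k ≤ n, ∀ x : X, Subsingleton (π_ k X x)

section NConnected

variable {X Y : Type*} [TopologicalSpace X] [TopologicalSpace Y] {N : Type*} {n : ℕ}

lemma subsingleton_homotopyGroup_iff {x : X} :
    Subsingleton (HomotopyGroup N X x) ↔
      ∀ f : Ω^ N X x, GenLoop.Homotopic f GenLoop.const := by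
  refine ⟨fun _ f => Quotient.exact <|
    Subsingleton.elim (α := HomotopyGroup N X x) ⟦f⟧ ⟦GenLoop.const⟧, fun h => ⟨?_⟩⟩
  rintro ⟨f⟩ ⟨g⟩
  exact Quotient.sound ((h f).trans (h g).symm)

lemma subsingleton_homotopyGroup_of_leftInverse {i : C(Y, X)} {ρ : C(X, Y)}
    (h : Function.LeftInverse ρ i) (y : Y) [Subsingleton (HomotopyGroup N X (i y))] :
    Subsingleton (HomotopyGroup N Y y) := by
  rw [subsingleton_homotopyGroup_iff]
  intro f
  let g : Ω^ N X (i y) := ⟨i.comp f.1, fun t ht => congrArg i (GenLoop.boundary f t ht)⟩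
  have hg : GenLoop.Homotopic g GenLoop.const := subsingleton_homotopyGroup_iff.1 inferInstance g
  have hf : ρ.comp g.1 = f.1 := ContinuousMap.ext fun t => h (f t)
  have hconst : ρ.comp (GenLoop.const : Ω^ N X (i y)).1 = (GenLoop.const : Ω^ N Y y).1 :=
    ContinuousMap.ext fun _ => h y
  have hρ := ContinuousMap.HomotopicRel.comp_continuousMap hg ρ
  rwa [hf, hconst] at hρ

namespace IsNConnected

lemma of_leftInverse (hX : IsNConnected n X) {i : C(Y, X)} {ρ : C(X, Y)}
    (h : Function.LeftInverse ρ i) : IsNConnected n Y where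
  nonempty := hX.nonempty.map ρ
  subsingleton_pi k hk y :=
    have := hX.subsingleton_pi k hk (i y)
    subsingleton_homotopyGroup_of_leftInverse h y

lemma pathConnectedSpace (hX : IsNConnected n X) : PathConnectedSpace X := by
  obtain ⟨x⟩ := hX.nonempty
  have := hX.subsingleton_pi 0 n.zero_le x
  exact pathConnectedSpace_iff_zerothHomotopy.2
    ⟨⟨⟦x⟧⟩, (HomotopyGroup.pi0EquivZerothHomotopy (x := x)).symm.subsingleton⟩

lemma simplyConnectedSpace (hX : IsNConnected n X) (hn : 1 ≤ n) : SimplyConnectedSpace X := by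
  refine simply_connected_iff_loops_nullhomotopic.2 ⟨hX.pathConnectedSpace, fun x γ => ?_⟩
  have := hX.subsingleton_pi 1 hn x
  have : Subsingleton (FundamentalGroup X x) :=
    (HomotopyGroup.pi1EquivFundamentalGroup (x := x)).symm.subsingleton
  exact Quotient.exact (Subsingleton.elim (α := FundamentalGroup X x) ⟦γ⟧ ⟦.refl x⟧)

end IsNConnected

end NConnected

section GeneralPosition

open Module

variable {E F : Type*} [NormedAddCommGroup E] [NormedSpace ℝ E] [FiniteDimensional ℝ E]
  [NormedAddCommGroup F] [NormedSpace ℝ F] [FiniteDimensional ℝ F]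

/- Where `w e ≠ 0`, `A e + w e • p = v ∈ W` determines `p` as a `C¹` function of `(v, e)`. -/
lemma dimH_setOf_exists_add_smul_mem_le {A : E → F} (hA : ContDiff ℝ 1 A) {w : E → ℝ}
    (hw : ContDiff ℝ 1 w) (W : Submodule ℝ F) :
    dimH {p | ∃ e, w e ≠ 0 ∧ A e + w e • p ∈ W} ≤ finrank ℝ W + finrank ℝ E := by
  let Φ : W × E → F := fun q => (w q.2)⁻¹ • (q.1 - A q.2)
  let S : Set (W × E) := {q | w q.2 ≠ 0}
  have hΦ : ∀ q ∈ S, ContDiffAt ℝ 1 Φ q := fun q hq => by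
    have hv : ContDiff ℝ 1 fun q : W × E => (q.1 : F) - A q.2 :=
      (W.subtypeL.contDiff.comp contDiff_fst).sub (hA.comp contDiff_snd)
    exact ((hw.comp contDiff_snd).contDiffAt.inv hq).smul hv.contDiffAt
  have himage : {p | ∃ e, w e ≠ 0 ∧ A e + w e • p ∈ W} ⊆ Φ '' S := by
    rintro p ⟨e, he, hp⟩
    exact ⟨(⟨_, hp⟩, e), he, by simp [Φ, smul_smul, inv_mul_cancel₀ he]⟩
  calc dimH {p | ∃ e, w e ≠ 0 ∧ A e + w e • p ∈ W}
      ≤ dimH (Φ '' S) := dimH_mono himage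
    _ ≤ dimH S := dimH_image_le_of_locally_lipschitzOn fun q hq =>
        let ⟨C, t, ht, hlip⟩ := (hΦ q hq).exists_lipschitzOnWith
        ⟨C, t, mem_nhdsWithin_of_mem_nhds ht, hlip⟩
    _ ≤ dimH (Set.univ : Set (W × E)) := dimH_mono (Set.subset_univ _)
    _ = finrank ℝ W + finrank ℝ E := by
        rw [Real.dimH_univ_eq_finrank, finrank_prod, Nat.cast_add]

lemma exists_forall_add_smul_notMem {ι : Type*} [Countable ι] {W : ι → Submodule ℝ F}
    (hW : ∀ i, finrank ℝ (W i) + finrank ℝ E < finrank ℝ F)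
    {A : E → F} (hA : ContDiff ℝ 1 A) {w : E → ℝ} (hw : ContDiff ℝ 1 w) :
    ∃ p : F, ∀ e, w e ≠ 0 → ∀ i, A e + w e • p ∉ W i := by
  rcases isEmpty_or_nonempty ι with _ | ⟨⟨i₀⟩⟩
  · exact ⟨0, fun _ _ => isEmptyElim⟩
  let B : ι → Set F := fun i => {p | ∃ e, w e ≠ 0 ∧ A e + w e • p ∈ W i}
  have hB : dimH (⋃ i, B i) ≤ (finrank ℝ F - 1 : ℕ) := by
    rw [dimH_iUnion]
    refine iSup_le fun i => (dimH_setOf_exists_add_smul_mem_le hA hw (W i)).trans ?_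
    exact_mod_cast Nat.le_sub_one_of_lt (hW i)
  have hlt : dimH (⋃ i, B i) < finrank ℝ F :=
    hB.trans_lt (by exact_mod_cast Nat.sub_one_lt_of_lt (hW i₀))
  obtain ⟨p, hp⟩ := (dense_compl_of_dimH_lt_finrank hlt).nonempty
  exact ⟨p, fun e he i hmem => hp (Set.mem_iUnion.2 ⟨i, e, he, hmem⟩)⟩

end GeneralPosition

section ArrangementComplement

variable {N : Type*}

lemma prod_mul_one_sub_eq_zero_iff_mem_boundary [Fintype N] (y : N → I) :
    ∏ i, (y i : ℝ) * (1 - y i) = 0 ↔ y ∈ Cube.boundary N := by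
  simp only [Finset.prod_eq_zero_iff, Finset.mem_univ, true_and, mul_eq_zero, sub_eq_zero,
    Cube.boundary, Set.mem_ofPred_eq, ← Set.Icc.coe_eq_zero, ← Set.Icc.coe_eq_one, @eq_comm ℝ 1]

lemma homotopic_of_continuous {F : Type*} [TopologicalSpace F] {U : Set F} {z : U}
    {f g : Ω^ N U z} {H : I × (N → I) → F} (hH : Continuous H) (hU : ∀ q, H q ∈ U)
    (hzero : ∀ y, H (0, y) = f y) (hone : ∀ y, H (1, y) = g y)
    (hboundary : ∀ t, ∀ y ∈ Cube.boundary N, H (t, y) = z) : GenLoop.Homotopic f g :=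
  ⟨{  toFun q := ⟨H q, hU q⟩
      continuous_toFun := hH.subtype_mk hU
      map_zero_left y := Subtype.ext (hzero y)
      map_one_left y := Subtype.ext (hone y)
      prop' t y hy := Subtype.ext <| (hboundary t y hy).trans <|
        congrArg Subtype.val (GenLoop.boundary f y hy).symm }⟩

variable [Fintype N] {F : Type*} [NormedAddCommGroup F] [NormedSpace ℝ F]

lemma exists_contDiff_approx_genLoop (k : ℕ∞) {U : Set F} {z : U} (f : Ω^ N U z) {ε : ℝ}
    (hε : 0 < ε) :
    ∃ G : (N → ℝ) → F, ContDiff ℝ k G ∧ (∀ y : N → I, dist (G fun i => y i) (f y) < ε) ∧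
      ∀ y ∈ Cube.boundary N, G (fun i => y i) = z := by
  let P : (N → ℝ) → (N → I) := fun x i => Set.projIcc 0 1 zero_le_one (x i)
  have hP : Continuous P := continuous_pi fun i => continuous_projIcc.comp (continuous_apply i)
  have hP_coe : ∀ y : N → I, P (fun i => y i) = y := fun y =>
    funext fun i => Set.projIcc_val zero_le_one (y i)
  -- Smoothing does not enlarge supports, so smoothing `f - z` keeps the boundary values.
  let D : (N → ℝ) → F := fun x => (f (P x) : F) - z
  have hD : Continuous D := by fun_prop
  obtain ⟨G, hG, hclose, hsupp⟩ :=
    hD.exists_contDiff_approx k (ε := fun _ => ε) continuous_const fun _ => hε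
  refine ⟨fun x => z + G x, contDiff_const.add hG, fun y => ?_, fun y hy => ?_⟩
  · have hy := hclose fun i => y i
    rw [dist_eq_norm] at hy ⊢
    simpa only [D, hP_coe, sub_sub_eq_add_sub, add_comm] using hy
  · have hDy : D (fun i => y i) = 0 := by
      simp only [D, hP_coe, sub_eq_zero]
      exact congrArg Subtype.val (GenLoop.boundary f y hy)
    have hGy : G (fun i => y i) = 0 := Function.notMem_support.1 fun h => hsupp h hDy
    simp [hGy]

lemma exists_contDiff_homotopic_genLoop (k : ℕ∞) {U : Set F} (hU : IsOpen U) {z : U}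
    (f : Ω^ N U z) :
    ∃ (g : Ω^ N U z) (G : (N → ℝ) → F), ContDiff ℝ k G ∧ (∀ y, (g y : F) = G fun i => y i) ∧
      GenLoop.Homotopic f g := by
  have hcompact : IsCompact (Set.range fun y => (f y : F)) :=
    isCompact_range (by fun_prop)
  obtain ⟨ε, hε, hthick⟩ := hcompact.exists_thickening_subset_open hU
    (Set.range_subset_iff.2 fun y => (f y).2)
  obtain ⟨G, hG, hclose, hboundary⟩ := exists_contDiff_approx_genLoop k f hε
  have hball : ∀ y, Metric.ball (f y : F) ε ⊆ U := fun y =>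
    (Metric.ball_subset_thickening (Set.mem_range_self y) ε).trans hthick
  let g : Ω^ N U z := ⟨⟨fun y => ⟨G fun i => y i, hball y (hclose y)⟩,
    (hG.continuous.comp (by fun_prop)).subtype_mk _⟩, fun y hy => Subtype.ext (hboundary y hy)⟩
  refine ⟨g, G, hG, fun y => rfl, homotopic_of_continuous
    (H := fun q => AffineMap.lineMap (f q.2 : F) (g q.2 : F) (q.1 : ℝ)) ?_ ?_ ?_ ?_ ?_⟩
  · simp only [AffineMap.lineMap_apply_module]
    fun_prop
  · exact fun q => hball q.2 <| (convex_ball _ ε).lineMap_mem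
      (Metric.mem_ball_self hε) (hclose q.2) q.1.2
  · simp
  · simp
  · intro t y hy
    simp [GenLoop.boundary f y hy, GenLoop.boundary g y hy]

open Module

variable [FiniteDimensional ℝ F] {ι : Type*} [Finite ι] {W : ι → Submodule ℝ F}

lemma isOpen_compl_iUnion_submodule (W : ι → Submodule ℝ F) :
    IsOpen (⋃ i, (W i : Set F))ᶜ :=
  (isClosed_iUnion_of_finite fun i => (W i).closed_of_finiteDimensional).isOpen_compl

lemma homotopic_const_of_contDiff
    (hW : ∀ i, finrank ℝ (W i) + (Fintype.card N + 1) < finrank ℝ F)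
    {z : ↥(⋃ i, (W i : Set F))ᶜ} {g : Ω^ N ↥(⋃ i, (W i : Set F))ᶜ z} {G : (N → ℝ) → F}
    (hG : ContDiff ℝ 1 G) (hgG : ∀ y, (g y : F) = G fun i => y i) :
    GenLoop.Homotopic g GenLoop.const := by
  let A : ℝ × (N → ℝ) → F := fun e => (1 - e.1) • G e.2 + e.1 • (z : F)
  let w : ℝ × (N → ℝ) → ℝ := fun e => e.1 * (1 - e.1) * ∏ i, e.2 i * (1 - e.2 i)
  have hA : ContDiff ℝ 1 A := by fun_prop
  have hw : ContDiff ℝ 1 w := by fun_prop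
  obtain ⟨p, hp⟩ := exists_forall_add_smul_notMem (by simpa [add_comm] using hW) hA hw
  let c : I × (N → I) → ℝ × (N → ℝ) := fun q => (q.1, fun i => q.2 i)
  have hw_boundary : ∀ t, ∀ y ∈ Cube.boundary N, w (c (t, y)) = 0 := fun t y hy => by
    simp only [w, c, (prod_mul_one_sub_eq_zero_iff_mem_boundary y).2 hy, mul_zero]
  have hA_boundary : ∀ t, ∀ y ∈ Cube.boundary N, A (c (t, y)) = z := fun t y hy => by
    simp only [A, c, ← hgG, GenLoop.boundary g y hy, ← add_smul, sub_add_cancel, one_smul]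
  refine homotopic_of_continuous (H := fun q => A (c q) + w (c q) • p) ?_ ?_ ?_ ?_ ?_
  · have := hA.continuous
    have := hw.continuous
    fun_prop
  · rintro ⟨t, y⟩
    by_cases hwq : w (c (t, y)) = 0
    · suffices A (c (t, y)) ∈ (⋃ i, (W i : Set F))ᶜ by simpa [hwq] using this
      obtain (ht | ht) | hy : ((t : ℝ) = 0 ∨ 1 - (t : ℝ) = 0) ∨ y ∈ Cube.boundary N := by
        simpa only [w, c, mul_eq_zero, prod_mul_one_sub_eq_zero_iff_mem_boundary] using hwq
      · simpa [A, c, ht, ← hgG] using (g y).2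
      · simpa [A, c, ht, ← sub_eq_zero.1 ht] using z.2
      · exact hA_boundary t y hy ▸ z.2
    · simpa using hp _ hwq
  · simp [A, w, c, hgG]
  · simp [A, w, c]
  · intro t y hy
    simp [hA_boundary t y hy, hw_boundary t y hy]

lemma homotopic_const_of_finrank_lt
    (hW : ∀ i, finrank ℝ (W i) + (Fintype.card N + 1) < finrank ℝ F)
    {z : ↥(⋃ i, (W i : Set F))ᶜ} (f : Ω^ N ↥(⋃ i, (W i : Set F))ᶜ z) :
    GenLoop.Homotopic f GenLoop.const := by
  obtain ⟨g, G, hG, hgG, hfg⟩ :=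
    exists_contDiff_homotopic_genLoop 1 (isOpen_compl_iUnion_submodule W) f
  exact hfg.trans (homotopic_const_of_contDiff hW hG hgG)

theorem isNConnected_compl_iUnion_submodule {n : ℕ}
    (hW : ∀ i, finrank ℝ (W i) + (n + 1) < finrank ℝ F) :
    IsNConnected n ↥(⋃ i, (W i : Set F))ᶜ where
  nonempty := by
    obtain ⟨p, hp⟩ := exists_forall_add_smul_notMem (E := ℝ) (W := W)
      (fun i => by rw [finrank_self]; have := hW i; lia)
      (contDiff_const (c := 0)) (contDiff_const (c := 1))
    exact ⟨p, by simpa using hp⟩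
  subsingleton_pi k hk _ := subsingleton_homotopyGroup_iff.2 <| homotopic_const_of_finrank_lt
    fun i => by rw [Fintype.card_fin]; have := hW i; lia

end ArrangementComplement

section CoordinateArrangement

open Module

variable {r : ℕ} {K : Set (Finset (Fin r))}

/-- The coordinate subspace `L_τ ⊆ ℂ^r` as a real subspace, so that real dimensions can be
counted. -/
def coordSubspace (τ : Finset (Fin r)) : Submodule ℝ (Fin r → ℂ) :=
  ⨅ i ∈ (τ : Set (Fin r)), LinearMap.ker (LinearMap.proj i)

lemma coe_coordSubspace (τ : Finset (Fin r)) : (coordSubspace τ : Set (Fin r → ℂ)) = LSub τ := by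
  ext x
  simp [coordSubspace, LSub]

lemma finrank_coordSubspace (τ : Finset (Fin r)) :
    finrank ℝ (coordSubspace τ) = 2 * (r - τ.card) := by
  have e := LinearMap.iInfKerProjEquiv ℝ (fun _ : Fin r => ℂ)
    (disjoint_compl_left : Disjoint (τ : Set (Fin r))ᶜ τ) (by simp)
  rw [coordSubspace, e.finrank_eq, finrank_pi_fintype]
  simp only [Complex.finrank_real_complex, Finset.sum_const, Finset.card_univ,
    Fintype.card_compl_set, Fintype.card_fin, Fintype.card_coe, Finset.coe_sort_coe, smul_eq_mul,
    mul_comm]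

lemma UK_eq_compl_iUnion_coordSubspace (K : Set (Finset (Fin r))) :
    UK K = (⋃ τ : {τ // τ ∉ K}, (coordSubspace τ.1 : Set (Fin r → ℂ)))ᶜ := by
  simp only [UK, coe_coordSubspace, Set.iUnion_subtype, Set.mem_ofPred_eq]

theorem isNConnected_UK {m : ℕ} (hK : ∀ τ : Finset (Fin r), τ.card ≤ m → τ ∈ K) :
    IsNConnected (2 * m) (UK K) := by
  rw [UK_eq_compl_iUnion_coordSubspace]
  refine isNConnected_compl_iUnion_submodule fun ⟨τ, hτ⟩ => ?_
  have hm : m < τ.card := not_le.1 fun h => hτ (hK τ h)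
  have hr : τ.card ≤ r := card_finset_fin_le τ
  rw [finrank_coordSubspace, finrank_pi_fintype]
  simp only [Complex.finrank_real_complex, Finset.sum_const, Finset.card_univ, Fintype.card_fin,
    smul_eq_mul]
  lia

end CoordinateArrangement

section Retraction

variable {r : ℕ} {K : Set (Finset (Fin r))} {x y : Fin r → ℂ}

/-- The largest `c ∈ [0, 1]` such that every non-simplex of `K` has a vertex `i` with `c ≤ ‖x i‖`.
It is positive on `U(K)`, and the coordinates of modulus less than `c` form a simplex. -/
def scale (K : Set (Finset (Fin r))) (x : Fin r → ℂ) : I :=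
  (Finset.univ.filter (· ∉ K)).inf fun τ => τ.sup fun i => Set.projIcc 0 1 zero_le_one ‖x i‖

lemma continuous_scale (K : Set (Finset (Fin r))) : Continuous (scale K) :=
  Continuous.finset_inf_apply fun _ _ => Continuous.finset_sup_apply fun i _ =>
    continuous_projIcc.comp (continuous_apply i).norm

lemma scale_congr (h : ∀ i, ‖x i‖ = ‖y i‖) : scale K x = scale K y := by
  simp only [scale, h]

lemma scale_pos_iff : 0 < scale K x ↔ x ∈ UK K := by
  have hproj : ∀ a : ℝ, 0 < Set.projIcc 0 1 zero_le_one a ↔ 0 < a := fun a => by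
    simp [← Subtype.coe_lt_coe, Set.coe_projIcc]
  have htop : (0 : I) < ⊤ := zero_lt_one
  simp [scale, mem_UK, Finset.lt_inf_iff htop, Finset.lt_sup_iff, hproj]

lemma le_scale_iff {c : I} (hc : 0 < c) :
    c ≤ scale K x ↔ ∀ τ ∉ K, ∃ i ∈ τ, (c : ℝ) ≤ ‖x i‖ := by
  have hc' : (0 : ℝ) < c := hc
  have hproj : ∀ a : ℝ, c ≤ Set.projIcc 0 1 zero_le_one a ↔ (c : ℝ) ≤ a := fun a => by
    simp [← Subtype.coe_le_coe, Set.coe_projIcc, c.2.2, hc'.not_ge]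
  simp [scale, Finset.le_inf_iff, Finset.le_sup_iff hc, hproj]

lemma filter_norm_lt_scale_mem (hx : x ∈ UK K) :
    (Finset.univ.filter fun i => ‖x i‖ < scale K x) ∈ K := by
  by_contra h
  obtain ⟨i, hi, hle⟩ := (le_scale_iff (scale_pos_iff.2 hx)).1 le_rfl _ h
  exact hle.not_gt (Finset.mem_filter.1 hi).2

lemma scale_eq_one (hK : IsLowerSet K) (hx : x ∈ ZK K) : scale K x = 1 := by
  refine le_antisymm unitInterval.le_one' ((le_scale_iff zero_lt_one).2 fun τ hτ => ?_)
  by_contra! h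
  exact hτ (hK (fun i hi => by simpa using h i hi) hx.2)

lemma ZK_subset_UK (hK : IsLowerSet K) : ZK K ⊆ UK K := fun _ hx =>
  scale_pos_iff.1 (scale_eq_one hK hx ▸ zero_lt_one)

/-- The factor by which the retraction `U(K) → Z_K` multiplies the `i`-th coordinate of `x`. -/
def retractionFactor (K : Set (Finset (Fin r))) (x : Fin r → ℂ) (i : Fin r) : ℝ :=
  (max (scale K x : ℝ) ‖x i‖)⁻¹

lemma retractionFactor_congr (h : ∀ i, ‖x i‖ = ‖y i‖) :
    retractionFactor K x = retractionFactor K y := by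
  funext i
  simp only [retractionFactor, scale_congr h, h]

lemma max_scale_norm_pos (hx : x ∈ UK K) (i : Fin r) : 0 < max (scale K x : ℝ) ‖x i‖ :=
  lt_max_of_lt_left (scale_pos_iff.2 hx)

lemma retractionFactor_pos (hx : x ∈ UK K) (i : Fin r) : 0 < retractionFactor K x i :=
  inv_pos.2 (max_scale_norm_pos hx i)

lemma retractionFactor_eq_one (hK : IsLowerSet K) (hx : x ∈ ZK K) : retractionFactor K x = 1 := by
  ext i
  simp [retractionFactor, scale_eq_one hK hx, hx.1 i]

lemma continuous_retractionFactor (K : Set (Finset (Fin r))) :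
    Continuous fun x : UK K => retractionFactor K x := by
  have hscale : Continuous fun x : UK K => scale K x :=
    (continuous_scale K).comp continuous_subtype_val
  have hnorm : ∀ i, Continuous fun x : UK K => ‖(x : Fin r → ℂ) i‖ := fun i =>
    ((continuous_apply i).comp continuous_subtype_val).norm
  exact continuous_pi fun i => ((continuous_subtype_val.comp hscale).max (hnorm i)).inv₀
    fun x => (max_scale_norm_pos x.2 i).ne'

lemma smul_mem_UK {c : Fin r → ℝ} (hc : ∀ i, c i ≠ 0) (hx : x ∈ UK K) : c • x ∈ UK K := by
  rw [mem_UK] at hx ⊢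
  intro τ hτ
  obtain ⟨i, hi, hxi⟩ := hx τ hτ
  exact ⟨i, hi, smul_ne_zero (hc i) hxi⟩

lemma retractionFactor_smul_mem_ZK (hK : IsLowerSet K) (hx : x ∈ UK K) :
    retractionFactor K x • x ∈ ZK K := by
  have hnorm i : ‖(retractionFactor K x • x) i‖ = ‖x i‖ / max (scale K x : ℝ) ‖x i‖ := by
    rw [Pi.smul_apply', norm_smul, Real.norm_of_nonneg (retractionFactor_pos hx i).le,
      retractionFactor, inv_mul_eq_div]
  refine ⟨fun i => ?_, hK (fun i hi => ?_) (filter_norm_lt_scale_mem hx)⟩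
  · rw [hnorm]
    exact div_le_one_of_le₀ (le_max_right _ _) (max_scale_norm_pos hx i).le
  · have hlt := (Finset.mem_filter.1 hi).2
    rw [hnorm, div_lt_one (max_scale_norm_pos hx i), lt_max_iff] at hlt
    exact Finset.mem_filter.2 ⟨Finset.mem_univ i, hlt.resolve_right (lt_irrefl _)⟩

/-- The retraction `r_ℂ : U(K) → Z_K`. -/
def retraction (hK : IsLowerSet K) : C(UK K, ZK K) where
  toFun x := ⟨retractionFactor K x • (x : Fin r → ℂ), retractionFactor_smul_mem_ZK hK x.2⟩
  continuous_toFun :=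
    ((continuous_retractionFactor K).smul continuous_subtype_val).subtype_mk _

lemma retraction_leftInverse_inclusion (hK : IsLowerSet K) :
    Function.LeftInverse (retraction hK) (ContinuousMap.inclusion (ZK_subset_UK hK)) := fun x =>
  Subtype.ext <| by simp [retraction, ContinuousMap.inclusion, retractionFactor_eq_one hK x.2]

lemma inclusion_comp_retraction_homotopicRel_id (hK : IsLowerSet K) :
    ((ContinuousMap.inclusion (ZK_subset_UK hK)).comp (retraction hK)).HomotopicRel
      (ContinuousMap.id _) {x | x.1 ∈ ZK K} := by
  let c : I × UK K → Fin r → ℝ := fun q =>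
    (1 - (q.1 : ℝ)) • retractionFactor K q.2 + (q.1 : ℝ) • 1
  have hc_continuous : Continuous c := by
    have := (continuous_retractionFactor K).comp (continuous_snd (X := I))
    fun_prop
  have hc_pos : ∀ q i, 0 < c q i := fun q i =>
    convex_Ioi (0 : ℝ) (retractionFactor_pos q.2.2 i) (one_pos (α := ℝ))
      (sub_nonneg.2 q.1.2.2) q.1.2.1 (sub_add_cancel 1 _)
  exact ⟨{
    toFun q := ⟨c q • (q.2 : Fin r → ℂ), smul_mem_UK (fun i => (hc_pos q i).ne') q.2.2⟩
    continuous_toFun :=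
      (hc_continuous.smul (continuous_subtype_val.comp continuous_snd)).subtype_mk _
    map_zero_left x := Subtype.ext <| by simp [c, retraction, ContinuousMap.inclusion]
    map_one_left x := Subtype.ext <| by simp [c]
    prop' t x hx := Subtype.ext <| by
      simp [c, retraction, ContinuousMap.inclusion, retractionFactor_eq_one hK hx,
        ← add_smul] }⟩

lemma retraction_smul (hK : IsLowerSet K) {u : Fin r → ℂ} (hu : ∀ i, ‖u i‖ = 1) (x : UK K)
    (hux : u * x ∈ UK K) : (retraction hK ⟨u * x, hux⟩ : Fin r → ℂ) = u * retraction hK x := by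
  have hfactor : retractionFactor K (u * x) = retractionFactor K x :=
    retractionFactor_congr fun i => by simp [hu]
  ext i
  simp [retraction, hfactor, mul_left_comm]

end Retraction

theorem isNConnected_ZK {r m : ℕ} {K : Set (Finset (Fin r))} (hK : IsLowerSet K)
    (hskeleton : ∀ τ : Finset (Fin r), τ.card ≤ m → τ ∈ K) : IsNConnected (2 * m) (ZK K) :=
  (isNConnected_UK hskeleton).of_leftInverse (retraction_leftInverse_inclusion hK)

theorem momentAngle_two_connected_and_retract_general {r m : ℕ} (K : Set (Finset (Fin r)))
    (hdown : ∀ s ∈ K, ∀ t ⊆ s, t ∈ K) (hskeleton : ∀ s : Finset (Fin r), s.card ≤ m → s ∈ K) :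
    IsNConnected (2 * m) (ZK K) ∧ ZK K ⊆ UK K ∧
    ∃ ret : C(↥(UK K), ↥(UK K)),
      (∀ x, (ret x).1 ∈ ZK K) ∧
      (∀ x : ↥(UK K), x.1 ∈ ZK K → ret x = x) ∧
      ret.HomotopicRel (ContinuousMap.id _) {x | x.1 ∈ ZK K} ∧
      (∀ u : Fin r → ℂ, (∀ i, ‖u i‖ = 1) →
        ∀ (x : ↥(UK K)) (hm : (fun i => u i * x.1 i) ∈ UK K),
          (ret ⟨fun i => u i * x.1 i, hm⟩).1 = fun i => u i * (ret x).1 i) := by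
  have hK : IsLowerSet K := fun s t hts hs => hdown s hs t hts
  have hsub := ZK_subset_UK hK
  exact ⟨isNConnected_ZK hK hskeleton, hsub,
    (ContinuousMap.inclusion hsub).comp (retraction hK),
    fun x => (retraction hK x).2,
    fun x hx => congrArg (ContinuousMap.inclusion hsub) <|
      retraction_leftInverse_inclusion hK ⟨x.1, hx⟩,
    inclusion_comp_retraction_homotopicRel_id hK,
    fun _ hu x hux => retraction_smul hK hu x hux⟩

/-- For a simplicial complex `K` on `[r]` containing all singletons:
(i) the moment-angle complex `Z_K` is 2-connected; (ii) `Z_K ⊆ U(K)` and there is a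
`𝕋^r`-equivariant deformation retraction of `U(K)` onto `Z_K`. -/
theorem momentAngle_two_connected_and_retract
    {r : ℕ} (K : Set (Finset (Fin r)))
    (hdown : ∀ s ∈ K, ∀ t ⊆ s, t ∈ K) (hE : (∅ : Finset (Fin r)) ∈ K)
    (hsingle : ∀ i : Fin r, ({i} : Finset (Fin r)) ∈ K) :
    (PathConnectedSpace ↥(ZK K) ∧ SimplyConnectedSpace ↥(ZK K) ∧
      ∀ z : ↥(ZK K), Subsingleton (HomotopyGroup (Fin 2) ↥(ZK K) z)) ∧
    ZK K ⊆ UK K ∧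
    ∃ ret : C(↥(UK K), ↥(UK K)),
      (∀ x, (ret x).1 ∈ ZK K) ∧
      (∀ x : ↥(UK K), x.1 ∈ ZK K → ret x = x) ∧
      ret.Homotopic (ContinuousMap.id _) ∧
      (∀ u : Fin r → ℂ, (∀ i, ‖u i‖ = 1) →
        ∀ (x : ↥(UK K)) (hm : (fun i => u i * x.1 i) ∈ UK K),
          (ret ⟨fun i => u i * x.1 i, hm⟩).1 = fun i => u i * (ret x).1 i) := by
  have hskeleton : ∀ s : Finset (Fin r), s.card ≤ 1 → s ∈ K := fun s hs => by
    obtain rfl | ⟨i, rfl⟩ := (Nat.le_one_iff_eq_zero_or_eq_one.1 hs).imp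
      Finset.card_eq_zero.1 Finset.card_eq_one.1
    · exact hE
    · exact hsingle i
  obtain ⟨hconn, hsub, ret, hret, hfix, hhomotopic, hequivariant⟩ :=
    momentAngle_two_connected_and_retract_general K hdown hskeleton
  exact ⟨⟨hconn.pathConnectedSpace, hconn.simplyConnectedSpace one_le_two,
    hconn.subsingleton_pi 2 le_rfl⟩, hsub, ret, hret, hfix, hhomotopic.homotopic, hequivariant⟩

end Toric
end
end
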